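/- Twirling into the distinct subspace. Let N ≥ 1, t ≥ 1, K ≥ 1. Let Π^dist be the diagonal projector on (ℂ^N)^{⊗t} onto the span of the basis vectors e_{x_1}⊗⋯⊗e_{x_t} with x_1,…,x_t ∈ [N] pairwise distinct. Then for every positive semidefinite matrix ρ on (ℂ^N)^{⊗t} ⊗ ℂ^K with Tr(ρ) = 1, one has ∫ Tr( (Π^dist⊗I_K) · (C^{⊗t}⊗I_K) · ρ · ((C^†)^{⊗t}⊗I_K) · (Π^dist⊗I_K) ) dμ(C) ≥ 1 − t(t−1)/(N+1), where μ is the normalized Haar probability measure on the unitary group U(N). -/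

import Mathlib

/-!
Write `ρ = B Bᴴ`. Then the trace in the statement is the probability that measuring the state
rotated by `C^{⊗t}` in the standard basis yields a string with pairwise distinct letters
(`trace_eq`), so by a union bound over pairs of positions it suffices that the expected
probability `P` of a collision between two positions `i ≠ j` is at most `2/(N+1)`.

No moment formula for the Haar measure is needed for this. Let `q(a,b)` be the expected probability
of seeing the letters `a, b` at positions `i, j`. It depends only on the rows `C_a`, `C_b`, as the
expectation of a positive quadratic form at `C_a ⊗ C_b` (`prob_pair`). For `a ≠ b`, left invariance
allows `C_a` to be replaced by `(C_a + ω C_b)/√2` for each fourth root of unity `ω`; averaging over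
`ω` kills the cross terms and yields `4 q(a,a) ≤ q(a,a) + q(b,b) + 2 q(a,b) + 2 q(b,a)`
(`collision_le`). Summing over `a ≠ b` and using `∑ q = 1` gives `(N-1) P ≤ 2 (1-P)`, i.e.
`P ≤ 2/(N+1)` (`sum_collision_le`).
-/

open MeasureTheory
open scoped Kronecker Matrix ComplexOrder

noncomputable instance matrixMeasurableSpace {m n : Type*} : MeasurableSpace (Matrix m n ℂ) :=
  (inferInstance : MeasurableSpace (m → n → ℂ))

/-- The `t`-fold tensor power `C^{⊗t}` of a matrix `C` on `ℂ^N`, as a matrix on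
`(ℂ^N)^{⊗t}` (indexed by `Fin t → Fin N`). -/
noncomputable def tensorPow (N t : ℕ) (C : Matrix (Fin N) (Fin N) ℂ) :
    Matrix (Fin t → Fin N) (Fin t → Fin N) ℂ :=
  Matrix.of fun x y => ∏ i, C (x i) (y i)

/-- The diagonal projector on `(ℂ^N)^{⊗t}` onto the span of standard basis vectors with
pairwise distinct indices. -/
noncomputable def distProj (N t : ℕ) : Matrix (Fin t → Fin N) (Fin t → Fin N) ℂ :=
  Matrix.diagonal fun x => if Function.Injective x then 1 else 0

/-! ### Tensor powers of a unitary and two-position marginals -/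

/-- The probability of the outcome `x` when the (unnormalised, finite) mixture of the
pure states `ψ s` is rotated by `C^{⊗t}` and measured in the standard basis. -/
noncomputable def prob {N t : ℕ} {S : Type*} [Fintype S] (ψ : S → (Fin t → Fin N) → ℂ)
    (C : Matrix (Fin N) (Fin N) ℂ) (x : Fin t → Fin N) : ℝ :=
  ∑ s, Complex.normSq (∑ y, (∏ l, C (x l) (y l)) * ψ s y)

/-- The quadratic form `w ↦ ∑ₛ ‖⟨w| ψ s‖²` on the tensor factors `i` and `j`: the two indices
`y i`, `y j` of `ψ s` are contracted with the bilinear coefficients `w` (no conjugation), and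
the squared moduli are summed over the values `r` of the remaining indices. -/
noncomputable def pairForm {N t : ℕ} {S : Type*} [Fintype S] (ψ : S → (Fin t → Fin N) → ℂ)
    (i j : Fin t) (w : Fin N → Fin N → ℂ) : ℝ :=
  ∑ s, ∑ r : {l : Fin t // l ≠ i ∧ l ≠ j} → Fin N,
    Complex.normSq (∑ y : Fin t → Fin N,
      if (fun l : {l : Fin t // l ≠ i ∧ l ≠ j} => y l) = r then w (y i) (y j) * ψ s y else 0)

lemma col_orth {N : ℕ} (C : Matrix.unitaryGroup (Fin N) ℂ) (y z : Fin N) :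
    ∑ c, (C : Matrix (Fin N) (Fin N) ℂ) c y * star ((C : Matrix (Fin N) (Fin N) ℂ) c z) =
      if y = z then 1 else 0 := by
  have h := congrFun (congrFun (Matrix.UnitaryGroup.star_mul_self C) z) y
  rw [Matrix.star_eq_conjTranspose, Matrix.mul_apply, Matrix.one_apply] at h
  simp only [Matrix.conjTranspose_apply] at h
  simp only [mul_comm, eq_comm] at h ⊢
  exact h

/-- Unitarity of `C^{⊗t}`, entrywise. -/
lemma kernel_total {N t : ℕ} (C : Matrix.unitaryGroup (Fin N) ℂ) (y z : Fin t → Fin N) :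
    ∑ x : Fin t → Fin N, (∏ l, (C : Matrix (Fin N) (Fin N) ℂ) (x l) (y l)) *
      star (∏ l, (C : Matrix (Fin N) (Fin N) ℂ) (x l) (z l)) = if y = z then 1 else 0 := by
  simp only [star_prod, ← Finset.prod_mul_distrib]
  have := Fintype.prod_sum (fun (l : Fin t) (c : Fin N) =>
    (C : Matrix (Fin N) (Fin N) ℂ) c (y l) * star ((C : Matrix (Fin N) (Fin N) ℂ) c (z l)))
  rw [← this]
  simp only [col_orth, Fintype.prod_ite_zero, Finset.prod_const_one, funext_iff]

/-- Matrix entries of `(C^†)^{⊗t} P C^{⊗t}` (transposed), where `P` projects onto `x i = a`, `x j = b`: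
by unitarity every factor other than `i` and `j` reduces to the identity. -/
lemma kernel_pair {N t : ℕ} (C : Matrix.unitaryGroup (Fin N) ℂ) {i j : Fin t} (hij : i ≠ j)
    (a b : Fin N) (y z : Fin t → Fin N) :
    (∑ x : Fin t → Fin N, if x i = a ∧ x j = b then
      (∏ l, (C : Matrix (Fin N) (Fin N) ℂ) (x l) (y l)) *
      star (∏ l, (C : Matrix (Fin N) (Fin N) ℂ) (x l) (z l)) else 0) =
    if (fun l : {l : Fin t // l ≠ i ∧ l ≠ j} => y l) = (fun l : {l : Fin t // l ≠ i ∧ l ≠ j} => z l) then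
      ((C : Matrix (Fin N) (Fin N) ℂ) a (y i) * (C : Matrix (Fin N) (Fin N) ℂ) b (y j)) *
      star ((C : Matrix (Fin N) (Fin N) ℂ) a (z i) * (C : Matrix (Fin N) (Fin N) ℂ) b (z j))
    else 0 := by
  set M := (C : Matrix (Fin N) (Fin N) ℂ) with hM
  -- The summand factorises over positions, with indicator factors at `i` and `j`.
  let f : Fin t → Fin N → ℂ := fun l c =>
    (if (l = i → c = a) ∧ (l = j → c = b) then 1 else 0) * (M c (y l) * star (M c (z l)))
  have h1 : ∀ x : Fin t → Fin N, (if x i = a ∧ x j = b then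
      (∏ l, M (x l) (y l)) * star (∏ l, M (x l) (z l)) else 0) = ∏ l, f l (x l) := by
    intro x
    simp only [f, star_prod, Finset.prod_mul_distrib, Fintype.prod_ite_zero, Finset.prod_const_one]
    have : (∀ l, (l = i → x l = a) ∧ (l = j → x l = b)) ↔ (x i = a ∧ x j = b) :=
      ⟨fun h => ⟨(h i).1 rfl, (h j).2 rfl⟩, fun h l => ⟨fun e => e ▸ h.1, fun e => e ▸ h.2⟩⟩
    simp only [this, ite_mul, one_mul, zero_mul]
  simp only [h1]
  rw [← Fintype.prod_sum f]
  have h2 : ∀ l, ∑ c, f l c = (if l ≠ i ∧ l ≠ j → y l = z l then 1 else 0) *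
      ((if l = i then M a (y i) * star (M a (z i)) else 1) *
       (if l = j then M b (y j) * star (M b (z j)) else 1)) := by
    intro l
    by_cases hi : l = i
    · subst hi
      simp [f, hij]
    · by_cases hj : l = j
      · subst hj
        simp [f, hi]
      · simp [f, hi, hj]
        exact col_orth C (y l) (z l)
  simp only [h2, Finset.prod_mul_distrib, Fintype.prod_ite_zero, Finset.prod_const_one,
    Finset.prod_ite_eq', Finset.mem_univ, if_true, funext_iff, Subtype.forall]
  split_ifs
  · simp; ring
  · simp

lemma normSq_sum {ι : Type*} [Fintype ι] (f : ι → ℂ) :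
    ((Complex.normSq (∑ y, f y) : ℝ) : ℂ) = ∑ y, ∑ z, f y * star (f z) := by
  rw [← Complex.mul_conj, map_sum, Finset.sum_mul_sum]
  rfl

lemma prob_total {N t : ℕ} {S : Type*} [Fintype S] (ψ : S → (Fin t → Fin N) → ℂ)
    (C : Matrix.unitaryGroup (Fin N) ℂ) :
    ∑ x, prob ψ C x = ∑ s, ∑ y, Complex.normSq (ψ s y) := by
  simp only [prob]
  rw [Finset.sum_comm]
  refine Finset.sum_congr rfl fun s _ => ?_
  apply Complex.ofReal_injective
  push_cast
  simp only [normSq_sum]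
  rw [Finset.sum_comm]
  refine Finset.sum_congr rfl fun y _ => ?_
  rw [Finset.sum_comm]
  have : ∀ z, ∑ x : Fin t → Fin N, (∏ l, (C : Matrix (Fin N) (Fin N) ℂ) (x l) (y l)) * ψ s y *
      star ((∏ l, (C : Matrix (Fin N) (Fin N) ℂ) (x l) (z l)) * ψ s z) =
      (if y = z then 1 else 0) * (ψ s y * star (ψ s z)) := by
    intro z
    rw [← kernel_total C y z, Finset.sum_mul]
    refine Finset.sum_congr rfl fun x _ => ?_
    rw [star_mul']; ring
  simp only [this, ite_mul, one_mul, zero_mul, Finset.sum_ite_eq, Finset.mem_univ, if_true]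
  exact Complex.mul_conj _

/-- The marginal on two positions only sees the rows `a` and `b` of `C`, since the rotations of
the other factors cancel. -/
lemma prob_pair {N t : ℕ} {S : Type*} [Fintype S] (ψ : S → (Fin t → Fin N) → ℂ)
    (C : Matrix.unitaryGroup (Fin N) ℂ) {i j : Fin t} (hij : i ≠ j) (a b : Fin N) :
    (∑ x, if x i = a ∧ x j = b then prob ψ C x else 0) =
      pairForm ψ i j (fun p q => (C : Matrix (Fin N) (Fin N) ℂ) a p *
        (C : Matrix (Fin N) (Fin N) ℂ) b q) := by
  rw [← Finset.sum_filter]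
  simp only [prob, pairForm]
  rw [Finset.sum_comm]
  refine Finset.sum_congr rfl fun s _ => ?_
  apply Complex.ofReal_injective
  push_cast
  simp only [normSq_sum]
  rw [Finset.sum_comm, Finset.sum_comm (s := (Finset.univ : Finset ({l : Fin t // l ≠ i ∧ l ≠ j} → Fin N)))]
  refine Finset.sum_congr rfl fun y _ => ?_
  rw [Finset.sum_comm, Finset.sum_comm (s := (Finset.univ : Finset ({l : Fin t // l ≠ i ∧ l ≠ j} → Fin N)))]
  refine Finset.sum_congr rfl fun z _ => ?_
  have hk := congrArg (· * (ψ s y * star (ψ s z))) (kernel_pair C hij a b y z)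
  simp only [Finset.sum_mul] at hk
  refine Eq.trans ?_ (hk.trans ?_)
  · rw [Finset.sum_filter]
    refine Finset.sum_congr rfl fun x _ => ?_
    split_ifs
    · rw [star_mul']; ring
    · simp
  · simp only [ite_mul, zero_mul]
    rw [Finset.sum_ite_eq]
    simp only [Finset.mem_univ, if_true]
    by_cases h : (fun l : {l : Fin t // l ≠ i ∧ l ≠ j} => y l) = (fun l : {l : Fin t // l ≠ i ∧ l ≠ j} => z l)
    · simp only [h, if_true]
      simp only [star_mul']; ring
    · rw [if_neg h, if_neg (fun h' => h h'.symm)]; simp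

/-! ### Averaging over phases -/

/-- The discrete Fourier transform over the fourth roots of unity `ω` removes the cross terms of
`X + ω (Y + Y') + ω² Z`; the remaining `|Y + Y'|²` is at most `2|Y|² + 2|Y'|²`. -/
lemma four_phase (X Y Y' Z : ℂ) :
    Complex.normSq ((X + (Y + Y') + Z) / 2) +
    Complex.normSq ((X + Complex.I * (Y + Y') - Z) / 2) +
    Complex.normSq ((X - (Y + Y') + Z) / 2) +
    Complex.normSq ((X - Complex.I * (Y + Y') - Z) / 2) ≤
    Complex.normSq X + Complex.normSq Z + 2 * Complex.normSq Y + 2 * Complex.normSq Y' := by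
  simp only [Complex.normSq_apply]
  simp
  nlinarith [sq_nonneg (Y.re - Y'.re), sq_nonneg (Y.im - Y'.im)]

/-- `four_phase` for the form `pairForm`: averaging `u_ω ⊗ u_ω` with `u_ω = (u + ω v)/√2` over the
fourth roots of unity bounds the mean by the values on `u ⊗ u`, `v ⊗ v`, `u ⊗ v`, `v ⊗ u`. -/
lemma pairForm_phase {N t : ℕ} {S : Type*} [Fintype S] (ψ : S → (Fin t → Fin N) → ℂ)
    (i j : Fin t) (u v : Fin N → ℂ) (F : ℂ → ℝ)
    (hF : ∀ ω, F ω = pairForm ψ i j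
      (fun p q => ((u p + ω * v p) / (√2 : ℝ)) * ((u q + ω * v q) / (√2 : ℝ)))) :
    F 1 + F Complex.I + F (-1) + F (-Complex.I) ≤
      pairForm ψ i j (fun p q => u p * u q) + pairForm ψ i j (fun p q => v p * v q) +
      2 * pairForm ψ i j (fun p q => u p * v q) + 2 * pairForm ψ i j (fun p q => v p * u q) := by
  simp only [hF, pairForm, Finset.mul_sum, ← Finset.sum_add_distrib]
  refine Finset.sum_le_sum fun s _ => Finset.sum_le_sum fun r _ => ?_
  let L : (Fin N → Fin N → ℂ) →ₗ[ℂ] ℂ :=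
    { toFun := fun w => ∑ y : Fin t → Fin N,
        if (fun l : {l : Fin t // l ≠ i ∧ l ≠ j} => y l) = r then w (y i) (y j) * ψ s y else 0
      map_add' := by
        intro w w'
        rw [← Finset.sum_add_distrib]
        refine Finset.sum_congr rfl fun y _ => ?_
        split_ifs <;> simp [add_mul]
      map_smul' := by
        intro c w
        simp only [RingHom.id_apply, smul_eq_mul, Finset.mul_sum]
        refine Finset.sum_congr rfl fun y _ => ?_
        split_ifs <;> simp [mul_assoc] }
  have hs : ((√2 : ℝ) : ℂ) * ((√2 : ℝ) : ℂ) = 2 := by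
    rw [← Complex.ofReal_mul, Real.mul_self_sqrt (by norm_num)]; norm_num
  -- `L` is one linear component of the form: its value on `u_ω ⊗ u_ω` is quadratic in `ω`.
  have key : ∀ ω : ℂ, L (fun p q => ((u p + ω * v p) / (√2 : ℝ)) * ((u q + ω * v q) / (√2 : ℝ))) =
      (L (fun p q => u p * u q) + ω * (L (fun p q => u p * v q) + L (fun p q => v p * u q)) +
        ω ^ 2 * L (fun p q => v p * v q)) / 2 := by
    intro ω
    have : (fun p q => ((u p + ω * v p) / (√2 : ℝ)) * ((u q + ω * v q) / (√2 : ℝ))) =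
      (2⁻¹ : ℂ) • ((fun p q => u p * u q) + ω • ((fun p q => u p * v q) + (fun p q => v p * u q)) +
        ω ^ 2 • (fun p q => v p * v q)) := by
      funext p q
      simp only [Pi.smul_apply, Pi.add_apply, smul_eq_mul]
      rw [div_mul_div_comm, hs]; ring
    rw [this]
    simp only [map_smul, map_add, smul_eq_mul]
    ring
  have h := four_phase (L (fun p q => u p * u q)) (L (fun p q => u p * v q))
    (L (fun p q => v p * u q)) (L (fun p q => v p * v q))
  have e1 := key 1
  have e2 := key Complex.I
  have e3 := key (-1)
  have e4 := key (-Complex.I)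
  simp only [neg_sq, one_pow, one_mul, Complex.I_sq, neg_mul, ← sub_eq_add_neg] at e1 e2 e3 e4
  rw [← e1, ← e2, ← e3, ← e4] at h
  simp only [neg_mul, one_mul] at h ⊢
  exact h

/-- The identity outside the plane spanned by `e_a, e_b`, and on that plane the rotation with rows
`(e_a + ω e_b)/√2` and `(e_a - ω e_b)/√2`. It is unitary for `a ≠ b` and `|ω| = 1`. -/
noncomputable def mixMatrix {N : ℕ} (a b : Fin N) (ω : ℂ) : Matrix (Fin N) (Fin N) ℂ :=
  fun p q =>
    if p = a then (if q = a then ((√2 : ℝ) : ℂ)⁻¹ else 0) + (if q = b then ω * ((√2 : ℝ) : ℂ)⁻¹ else 0)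
    else if p = b then (if q = a then ((√2 : ℝ) : ℂ)⁻¹ else 0) + (if q = b then -ω * ((√2 : ℝ) : ℂ)⁻¹ else 0)
    else if p = q then 1 else 0

lemma mixMatrix_mem {N : ℕ} {a b : Fin N} (hab : a ≠ b) {ω : ℂ} (hω : ω * star ω = 1) :
    mixMatrix a b ω ∈ Matrix.unitaryGroup (Fin N) ℂ := by
  have hs : ((√2 : ℝ) : ℂ) * ((√2 : ℝ) : ℂ) = 2 := by
    rw [← Complex.ofReal_mul, Real.mul_self_sqrt (by norm_num)]; norm_num
  have hs2 : ((√2 : ℝ) : ℂ)⁻¹ * ((√2 : ℝ) : ℂ)⁻¹ = 1 / 2 := by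
    rw [← mul_inv, hs]; norm_num
  have hω' : ω * (starRingEnd ℂ) ω = 1 := hω
  rw [Matrix.mem_unitaryGroup_iff]
  ext p q
  rw [Matrix.star_eq_conjTranspose, Matrix.mul_apply, Matrix.one_apply]
  simp only [Matrix.conjTranspose_apply]
  by_cases hpa : p = a
  · subst hpa
    by_cases hqa : q = p
    · subst hqa
      simp [mixMatrix, add_mul, mul_add, Finset.sum_add_distrib, hab, hab.symm]
      linear_combination (1 + ω * (starRingEnd ℂ) ω) * hs2 + 1 / 2 * hω'
    · by_cases hqb : q = b
      · subst hqb
        simp [mixMatrix, add_mul, mul_add, Finset.sum_add_distrib, hab, hab.symm]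
        linear_combination (1 - ω * (starRingEnd ℂ) ω) * hs2 - 1 / 2 * hω'
      · simp [mixMatrix, hqa, hqb, Ne.symm hqa]
  · by_cases hpb : p = b
    · subst hpb
      by_cases hqa : q = a
      · subst hqa
        simp [mixMatrix, add_mul, mul_add, Finset.sum_add_distrib, hab, hab.symm]
        linear_combination (1 - ω * (starRingEnd ℂ) ω) * hs2 - 1 / 2 * hω'
      · by_cases hqb : q = p
        · subst hqb
          simp [mixMatrix, add_mul, mul_add, Finset.sum_add_distrib, hab, hab.symm]
          linear_combination (1 + ω * (starRingEnd ℂ) ω) * hs2 + 1 / 2 * hω'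
        · simp [mixMatrix, hab.symm, hqa, hqb, Ne.symm hqb]
    · by_cases hqa : q = a
      · subst hqa
        simp [mixMatrix, hpa, hpb]
      · by_cases hqb : q = b
        · subst hqb
          simp [mixMatrix, hpa, hpb, hqa]
        · simp [mixMatrix, hpa, hpb, hqa, hqb]

lemma mixMatrix_mul_row {N : ℕ} (a b : Fin N) (ω : ℂ) (C : Matrix (Fin N) (Fin N) ℂ) (p : Fin N) :
    (mixMatrix a b ω * C) a p = (C a p + ω * C b p) / (√2 : ℝ) := by
  rw [Matrix.mul_apply]
  simp [mixMatrix, add_mul, Finset.sum_add_distrib]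
  ring

/-! ### Measurability and invariance -/

lemma measurable_entry {N : ℕ} (a b : Fin N) :
    Measurable (fun C : Matrix.unitaryGroup (Fin N) ℂ => (C : Matrix (Fin N) (Fin N) ℂ) a b) := by
  have h1 : Measurable (fun C : Matrix.unitaryGroup (Fin N) ℂ =>
    (C : Matrix (Fin N) (Fin N) ℂ)) := measurable_subtype_coe
  exact (measurable_pi_apply b).comp ((measurable_pi_apply a).comp h1)

lemma measurable_left_mul {N : ℕ} (V : Matrix.unitaryGroup (Fin N) ℂ) :
    Measurable (fun U : Matrix.unitaryGroup (Fin N) ℂ => V * U) := by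
  refine Measurable.subtype_mk (measurable_pi_lambda _ fun a => measurable_pi_lambda _ fun b => ?_)
  change Measurable fun U : Matrix.unitaryGroup (Fin N) ℂ =>
    ((V : Matrix (Fin N) (Fin N) ℂ) * (U : Matrix (Fin N) (Fin N) ℂ)) a b
  simp only [Matrix.mul_apply]
  exact Finset.measurable_sum _ fun c _ => (measurable_entry c b).const_mul _

lemma measurable_prob {N t : ℕ} {S : Type*} [Fintype S] (ψ : S → (Fin t → Fin N) → ℂ)
    (x : Fin t → Fin N) :
    Measurable (fun C : Matrix.unitaryGroup (Fin N) ℂ => prob ψ C x) := by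
  unfold prob
  refine Finset.measurable_sum _ fun s _ => Complex.continuous_normSq.measurable.comp ?_
  exact Finset.measurable_sum _ fun y _ =>
    (Finset.measurable_prod _ fun l _ => measurable_entry _ _).mul_const _

lemma prob_nonneg {N t : ℕ} {S : Type*} [Fintype S] (ψ : S → (Fin t → Fin N) → ℂ)
    (C : Matrix (Fin N) (Fin N) ℂ) (x : Fin t → Fin N) : 0 ≤ prob ψ C x :=
  Finset.sum_nonneg fun _ _ => Complex.normSq_nonneg _

lemma integrable_prob {N t : ℕ} {S : Type*} [Fintype S] (ψ : S → (Fin t → Fin N) → ℂ)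
    (μ : Measure (Matrix.unitaryGroup (Fin N) ℂ)) [IsProbabilityMeasure μ] (x : Fin t → Fin N) :
    Integrable (fun C : Matrix.unitaryGroup (Fin N) ℂ => prob ψ C x) μ := by
  refine Integrable.of_bound (measurable_prob ψ x).aestronglyMeasurable
    (∑ s, ∑ y, Complex.normSq (ψ s y)) (Filter.Eventually.of_forall fun C => ?_)
  rw [Real.norm_of_nonneg (prob_nonneg _ _ _), ← prob_total ψ C]
  exact Finset.single_le_sum (f := fun x => prob ψ C x) (fun x _ => prob_nonneg _ _ _) (Finset.mem_univ x)

/-- The marginal probability that the measured string has letter `a` at position `i` and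
letter `b` at position `j`. -/
noncomputable def pairProb {N t : ℕ} {S : Type*} [Fintype S] (ψ : S → (Fin t → Fin N) → ℂ)
    (i j : Fin t) (a b : Fin N) (C : Matrix (Fin N) (Fin N) ℂ) : ℝ :=
  ∑ x, if x i = a ∧ x j = b then prob ψ C x else 0

lemma integrable_pairProb {N t : ℕ} {S : Type*} [Fintype S] (ψ : S → (Fin t → Fin N) → ℂ)
    (μ : Measure (Matrix.unitaryGroup (Fin N) ℂ)) [IsProbabilityMeasure μ]
    (i j : Fin t) (a b : Fin N) :
    Integrable (fun C : Matrix.unitaryGroup (Fin N) ℂ => pairProb ψ i j a b C) μ := by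
  refine integrable_finsetSum _ fun x _ => ?_
  split_ifs
  · exact integrable_prob ψ μ x
  · exact integrable_zero _ _ _

/-- Left invariance of `μ`, applied to the marginals. -/
lemma integral_invariant {N t : ℕ} {S : Type*} [Fintype S] (ψ : S → (Fin t → Fin N) → ℂ)
    (μ : Measure (Matrix.unitaryGroup (Fin N) ℂ)) [IsProbabilityMeasure μ]
    (hinv : ∀ V : Matrix.unitaryGroup (Fin N) ℂ, μ.map (fun U => V * U) = μ)
    (i j : Fin t) (a b : Fin N) (V : Matrix.unitaryGroup (Fin N) ℂ) :
    Integrable (fun C : Matrix.unitaryGroup (Fin N) ℂ => pairProb ψ i j a b (V * C).1) μ ∧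
    ∫ C : Matrix.unitaryGroup (Fin N) ℂ, pairProb ψ i j a b C ∂μ =
      ∫ C : Matrix.unitaryGroup (Fin N) ℂ, pairProb ψ i j a b (V * C).1 ∂μ := by
  have hI := integrable_pairProb ψ μ i j a b
  have hm := measurable_left_mul V
  constructor
  · rw [← hinv V] at hI
    exact (integrable_map_measure hI.aestronglyMeasurable hm.aemeasurable).1 hI
  · conv_lhs => rw [← hinv V]
    rw [← hinv V] at hI
    exact integral_map hm.aemeasurable hI.aestronglyMeasurable

/-! ### Collision probabilities -/

/-- For each fourth root of unity `ω`, invariance under `mixMatrix a b ω` replaces row `a` of `C` by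
`(C_a + ω C_b)/√2` without changing the mean; adding the four resulting identities and using
`pairForm_phase` compares collisions with non-collisions. -/
lemma collision_le {N t : ℕ} {S : Type*} [Fintype S] (ψ : S → (Fin t → Fin N) → ℂ)
    (μ : Measure (Matrix.unitaryGroup (Fin N) ℂ)) [IsProbabilityMeasure μ]
    (hinv : ∀ V : Matrix.unitaryGroup (Fin N) ℂ, μ.map (fun U => V * U) = μ)
    {i j : Fin t} (hij : i ≠ j) {a b : Fin N} (hab : a ≠ b) :
    4 * ∫ C : Matrix.unitaryGroup (Fin N) ℂ, pairProb ψ i j a a C ∂μ ≤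
      ∫ C : Matrix.unitaryGroup (Fin N) ℂ, pairProb ψ i j a a C ∂μ +
      ∫ C : Matrix.unitaryGroup (Fin N) ℂ, pairProb ψ i j b b C ∂μ +
      2 * ∫ C : Matrix.unitaryGroup (Fin N) ℂ, pairProb ψ i j a b C ∂μ +
      2 * ∫ C : Matrix.unitaryGroup (Fin N) ℂ, pairProb ψ i j b a C ∂μ := by
  have hp1 : (1 : ℂ) * star 1 = 1 := by simp
  have hp2 : Complex.I * star Complex.I = 1 := by simp
  have hp3 : (-1 : ℂ) * star (-1) = 1 := by simp
  have hp4 : (-Complex.I) * star (-Complex.I) = 1 := by simp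
  obtain ⟨i1, e1⟩ := integral_invariant ψ μ hinv i j a a ⟨_, mixMatrix_mem hab hp1⟩
  obtain ⟨i2, e2⟩ := integral_invariant ψ μ hinv i j a a ⟨_, mixMatrix_mem hab hp2⟩
  obtain ⟨i3, e3⟩ := integral_invariant ψ μ hinv i j a a ⟨_, mixMatrix_mem hab hp3⟩
  obtain ⟨i4, e4⟩ := integral_invariant ψ μ hinv i j a a ⟨_, mixMatrix_mem hab hp4⟩
  have I := integrable_pairProb ψ μ i j
  have hmono := integral_mono (μ := μ) (((i1.add i2).add i3).add i4)
    ((((I a a).add (I b b)).add ((I a b).const_mul 2)).add ((I b a).const_mul 2)) (by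
      intro C
      have h := pairForm_phase ψ i j (C.1 a) (C.1 b) _ (fun ω => rfl)
      simp only [Pi.add_apply]
      have key : ∀ (ω : ℂ) (hω : ω * star ω = 1),
          pairProb ψ i j a a ((⟨_, mixMatrix_mem hab hω⟩ : Matrix.unitaryGroup (Fin N) ℂ) * C).1 =
          pairForm ψ i j (fun p q => ((C.1 a p + ω * C.1 b p) / (√2 : ℝ)) *
            ((C.1 a q + ω * C.1 b q) / (√2 : ℝ))) := by
        intro ω hω
        refine (prob_pair ψ _ hij a a).trans ?_
        congr 1
        funext p q
        exact congrArg₂ (· * ·) (mixMatrix_mul_row a b ω C.1 p) (mixMatrix_mul_row a b ω C.1 q)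
      rw [key _ hp1, key _ hp2, key _ hp3, key _ hp4]
      have q := fun a b => prob_pair ψ C hij a b
      simp only [pairProb, q]
      exact h)
  rw [integral_add' ((i1.add i2).add i3) i4, integral_add' (i1.add i2) i3,
    integral_add' i1 i2, ← e1, ← e2, ← e3, ← e4,
    integral_add' (((I a a).add (I b b)).add ((I a b).const_mul 2)) ((I b a).const_mul 2),
    integral_add' ((I a a).add (I b b)) ((I a b).const_mul 2),
    integral_add' (I a a) (I b b), integral_const_mul, integral_const_mul] at hmono
  linarith

/-- Summing `collision_le` over `a ≠ b` gives `(N - 1) P ≤ 2 (1 - P)` for the expected probability `P` of a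
collision between positions `i` and `j`. -/
lemma sum_collision_le {N t : ℕ} {S : Type*} [Fintype S] (ψ : S → (Fin t → Fin N) → ℂ)
    (hψ : ∑ s, ∑ y, Complex.normSq (ψ s y) = 1)
    (μ : Measure (Matrix.unitaryGroup (Fin N) ℂ)) [IsProbabilityMeasure μ]
    (hinv : ∀ V : Matrix.unitaryGroup (Fin N) ℂ, μ.map (fun U => V * U) = μ)
    {i j : Fin t} (hij : i ≠ j) :
    ∑ a, ∫ C : Matrix.unitaryGroup (Fin N) ℂ, pairProb ψ i j a a C ∂μ ≤ 2 / ((N : ℝ) + 1) := by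
  set J : Fin N → Fin N → ℝ :=
    fun a b => ∫ C : Matrix.unitaryGroup (Fin N) ℂ, pairProb ψ i j a b C ∂μ with hJ
  change ∑ a, J a a ≤ _
  have htot : ∑ a, ∑ b, J a b = 1 := by
    simp only [hJ]
    have : ∀ a, ∑ b, ∫ C : Matrix.unitaryGroup (Fin N) ℂ, pairProb ψ i j a b C ∂μ =
        ∫ C : Matrix.unitaryGroup (Fin N) ℂ, ∑ b, pairProb ψ i j a b C ∂μ := fun a =>
      (integral_finsetSum _ fun b _ => integrable_pairProb ψ μ i j a b).symm
    simp only [this]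
    rw [← integral_finsetSum _ fun a _ =>
      integrable_finsetSum _ fun b _ => integrable_pairProb ψ μ i j a b]
    have h1 : ∀ C : Matrix.unitaryGroup (Fin N) ℂ, ∑ a, ∑ b, pairProb ψ i j a b C = 1 := by
      intro C
      rw [← hψ, ← prob_total ψ C]
      simp only [pairProb]
      simp only [Finset.sum_comm (t := (Finset.univ : Finset (Fin t → Fin N)))]
      refine Finset.sum_congr rfl fun x _ => ?_
      simp [ite_and]
    simp [h1]
  have hle : ∀ a b, (if a = b then 0 else 4 * J a a) ≤
      if a = b then 0 else J a a + J b b + 2 * J a b + 2 * J b a := by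
    intro a b
    split_ifs with h
    · exact le_rfl
    · exact collision_le ψ μ hinv hij h
  -- The same bound for all `a, b`, the diagonal terms cancelling to `0 ≤ 0`.
  have hle' : ∀ a b, 4 * J a a - (if a = b then 4 * J a a else 0) ≤
      (J a a + J b b + 2 * J a b + 2 * J b a) - (if a = b then 6 * J a a else 0) := by
    intro a b
    have := hle a b
    split_ifs at this ⊢ with h
    · subst h; linarith
    · linarith
  have hs := Finset.sum_le_sum fun a (_ : a ∈ Finset.univ) =>
    Finset.sum_le_sum fun b (_ : b ∈ Finset.univ) => hle' a b
  have hcomm : ∑ a, ∑ b, J b a = 1 := by rw [Finset.sum_comm]; exact htot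
  simp only [Finset.sum_sub_distrib, Finset.sum_add_distrib, ← Finset.mul_sum, htot, hcomm,
    Finset.sum_const, Finset.card_univ, Fintype.card_fin, nsmul_eq_mul, Finset.sum_ite_eq,
    Finset.mem_univ, if_true] at hs
  rw [le_div_iff₀ (by positivity)]
  linarith

/-- A string with a repeated letter has at least two ordered pairs of colliding positions. -/
lemma two_mul_not_injective_le {N t : ℕ} (x : Fin t → Fin N) :
    (2 : ℝ) * (if Function.Injective x then 0 else 1) ≤
      ∑ p ∈ (Finset.univ : Finset (Fin t)).offDiag, if x p.1 = x p.2 then (1 : ℝ) else 0 := by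
  by_cases h : Function.Injective x
  · simp only [h, if_true, mul_zero]
    exact Finset.sum_nonneg fun p _ => by split_ifs <;> norm_num
  · have h' := h
    simp only [Function.Injective, not_forall] at h'
    obtain ⟨i, j, hx, hij⟩ := h'
    have hsub : ({(i, j), (j, i)} : Finset (Fin t × Fin t)) ⊆ Finset.univ.offDiag := by
      intro p hp
      simp only [Finset.mem_insert, Finset.mem_singleton] at hp
      rcases hp with rfl | rfl <;> simp [hij, Ne.symm hij]
    refine le_trans ?_ (Finset.sum_le_sum_of_subset_of_nonneg hsub
      fun p _ _ => by split_ifs <;> norm_num)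
    rw [Finset.sum_pair (by simp [hij])]
    simp only [h, hx]
    norm_num

/-- The union bound over the `t (t - 1)` ordered pairs of positions, each collision being counted
twice. -/
lemma dist_bound {N t : ℕ} {S : Type*} [Fintype S] (ψ : S → (Fin t → Fin N) → ℂ)
    (hψ : ∑ s, ∑ y, Complex.normSq (ψ s y) = 1)
    (μ : Measure (Matrix.unitaryGroup (Fin N) ℂ)) [IsProbabilityMeasure μ]
    (hinv : ∀ V : Matrix.unitaryGroup (Fin N) ℂ, μ.map (fun U => V * U) = μ) :
    1 - (t : ℝ) * ((t : ℝ) - 1) / ((N : ℝ) + 1) ≤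
      ∫ C : Matrix.unitaryGroup (Fin N) ℂ,
        ∑ x, (if Function.Injective x then prob ψ C x else 0) ∂μ := by
  have hpt : ∀ C : Matrix.unitaryGroup (Fin N) ℂ,
      1 - (1 / 2) * ∑ p ∈ (Finset.univ : Finset (Fin t)).offDiag, ∑ a, pairProb ψ p.1 p.2 a a C ≤
        ∑ x, (if Function.Injective x then prob ψ C x else 0) := by
    intro C
    have e : ∑ p ∈ (Finset.univ : Finset (Fin t)).offDiag, ∑ a, pairProb ψ p.1 p.2 a a C =
        ∑ x, (∑ p ∈ (Finset.univ : Finset (Fin t)).offDiag,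
          if x p.1 = x p.2 then (1 : ℝ) else 0) * prob ψ C x := by
      simp only [Finset.sum_mul]
      rw [Finset.sum_comm (s := Finset.univ)]
      refine Finset.sum_congr rfl fun p _ => ?_
      simp only [pairProb]
      rw [Finset.sum_comm]
      refine Finset.sum_congr rfl fun x _ => ?_
      simp [ite_and, eq_comm]
    have htot : ∑ x, prob ψ C x = 1 := (prob_total ψ C).trans hψ
    rw [e, Finset.mul_sum, sub_le_iff_le_add, ← Finset.sum_add_distrib]
    refine htot.symm.trans_le ?_
    refine Finset.sum_le_sum fun x _ => ?_
    have h1 := mul_le_mul_of_nonneg_right (two_mul_not_injective_le x) (prob_nonneg ψ C x)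
    split_ifs at h1 ⊢ <;> linarith
  have hI1 : ∀ p : Fin t × Fin t, Integrable
      (fun C : Matrix.unitaryGroup (Fin N) ℂ => ∑ a, pairProb ψ p.1 p.2 a a C) μ := fun p =>
    integrable_finsetSum _ fun a _ => integrable_pairProb ψ μ _ _ _ _
  have hI2 : Integrable (fun C : Matrix.unitaryGroup (Fin N) ℂ =>
      ∑ p ∈ (Finset.univ : Finset (Fin t)).offDiag, ∑ a, pairProb ψ p.1 p.2 a a C) μ :=
    integrable_finsetSum _ fun p _ => hI1 p
  have hI3 : Integrable (fun C : Matrix.unitaryGroup (Fin N) ℂ =>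
      ∑ x, (if Function.Injective x then prob ψ C x else 0)) μ := by
    refine integrable_finsetSum _ fun x _ => ?_
    split_ifs
    · exact integrable_prob ψ μ x
    · exact integrable_zero _ _ _
  refine le_trans ?_ (integral_mono ((integrable_const 1).sub (hI2.const_mul (1 / 2))) hI3 hpt)
  simp only [Pi.sub_def]
  rw [integral_sub (integrable_const 1) (hI2.const_mul (1 / 2)), integral_const_mul,
    integral_finsetSum _ fun p _ => hI1 p]
  have hb : ∑ p ∈ (Finset.univ : Finset (Fin t)).offDiag,
      ∫ C : Matrix.unitaryGroup (Fin N) ℂ, ∑ a, pairProb ψ p.1 p.2 a a C ∂μ ≤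
      ∑ p ∈ (Finset.univ : Finset (Fin t)).offDiag, 2 / ((N : ℝ) + 1) := by
    refine Finset.sum_le_sum fun p hp => ?_
    rw [integral_finsetSum _ fun a _ => integrable_pairProb ψ μ _ _ _ _]
    exact sum_collision_le ψ hψ μ hinv (Finset.mem_offDiag.1 hp).2.2
  have hc : (((Finset.univ : Finset (Fin t)).offDiag.card : ℕ) : ℝ) = (t : ℝ) * t - t := by
    rw [Finset.offDiag_card, Nat.cast_sub (by simpa using Nat.le_mul_self t)]
    simp
  rw [Finset.sum_const, nsmul_eq_mul, hc] at hb
  simp only [integral_const, probReal_univ, smul_eq_mul, mul_one]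
  have : (t : ℝ) * ((t : ℝ) - 1) / ((N : ℝ) + 1) =
    (1 / 2) * (((t : ℝ) * t - t) * (2 / ((N : ℝ) + 1))) := by ring
  rw [this]
  linarith

/-! ### Reduction of the trace to outcome probabilities -/

lemma tensorPow_conjTranspose (N t : ℕ) (C : Matrix (Fin N) (Fin N) ℂ) :
    tensorPow N t Cᴴ = (tensorPow N t C)ᴴ := by
  ext x y
  simp [tensorPow, Matrix.conjTranspose_apply]

/-- With `ρ = B Bᴴ`, the trace in the theorem is the probability of measuring a string with distinct
letters, for the mixture of the slices of `B` indexed by the auxiliary index and the column. -/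
lemma trace_eq {N t K : ℕ}
    (B : Matrix ((Fin t → Fin N) × Fin K) ((Fin t → Fin N) × Fin K) ℂ)
    (C : Matrix (Fin N) (Fin N) ℂ) :
    (((distProj N t ⊗ₖ (1 : Matrix (Fin K) (Fin K) ℂ)) *
            (tensorPow N t C ⊗ₖ (1 : Matrix (Fin K) (Fin K) ℂ)) *
            (B * Bᴴ) *
            (tensorPow N t (Cᴴ) ⊗ₖ (1 : Matrix (Fin K) (Fin K) ℂ)) *
            (distProj N t ⊗ₖ (1 : Matrix (Fin K) (Fin K) ℂ))).trace).re =
    ∑ x, (if Function.Injective x then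
      prob (fun (s : Fin K × ((Fin t → Fin N) × Fin K)) y => B (y, s.1) s.2) C x else 0) := by
  have h1 : tensorPow N t Cᴴ ⊗ₖ (1 : Matrix (Fin K) (Fin K) ℂ) =
      (tensorPow N t C ⊗ₖ (1 : Matrix (Fin K) (Fin K) ℂ))ᴴ := by
    rw [Matrix.conjTranspose_kronecker, Matrix.conjTranspose_one, tensorPow_conjTranspose]
  have h2 : distProj N t ⊗ₖ (1 : Matrix (Fin K) (Fin K) ℂ) =
      Matrix.diagonal (fun p : (Fin t → Fin N) × Fin K =>
        if Function.Injective p.1 then (1 : ℂ) else 0) := by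
    rw [distProj, ← Matrix.diagonal_one, Matrix.diagonal_kronecker_diagonal]
    simp
  set T := tensorPow N t C ⊗ₖ (1 : Matrix (Fin K) (Fin K) ℂ) with hT
  rw [h1, h2]
  have h3 : ∀ D : Matrix ((Fin t → Fin N) × Fin K) ((Fin t → Fin N) × Fin K) ℂ,
      D * T * (B * Bᴴ) * Tᴴ * D = D * ((T * B) * (T * B)ᴴ) * D := by
    intro D
    simp only [Matrix.conjTranspose_mul, Matrix.mul_assoc]
  rw [h3, Matrix.trace, Complex.re_sum, Fintype.sum_prod_type]
  refine Finset.sum_congr rfl fun x _ => ?_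
  have hTB : ∀ k m, (T * B) (x, k) m = ∑ y, (∏ l, C (x l) (y l)) * B (y, k) m := by
    intro k m
    rw [Matrix.mul_apply, Fintype.sum_prod_type]
    refine Finset.sum_congr rfl fun y _ => ?_
    simp [hT, tensorPow, Matrix.kroneckerMap_apply, Matrix.one_apply]
  simp only [Matrix.diag_apply, Matrix.mul_diagonal, Matrix.diagonal_mul]
  split_ifs
  · simp only [prob, one_mul, mul_one, Fintype.sum_prod_type (α₁ := Fin K)]
    refine Finset.sum_congr rfl fun k _ => ?_
    rw [Matrix.mul_apply, Complex.re_sum]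
    refine Finset.sum_congr rfl fun m _ => ?_
    rw [Matrix.conjTranspose_apply, hTB]
    change (_ * (starRingEnd ℂ) _).re = _
    rw [Complex.mul_conj, Complex.ofReal_re]
  · simp

/-- **Twirling into the distinct subspace.** For any density matrix `ρ` on
`(ℂ^N)^{⊗t} ⊗ ℂ^K` and the normalized Haar probability measure `μ` on `U(N)`
(characterized as a left-invariant probability measure),
`∫ Tr(Π^dist⊗I · C^{⊗t}⊗I · ρ · (C†)^{⊗t}⊗I · Π^dist⊗I) dμ(C) ≥ 1 − t(t−1)/(N+1)`. -/
theorem twirling_into_distinct_subspace (N t K : ℕ) (hN : 1 ≤ N) (ht : 1 ≤ t) (hK : 1 ≤ K)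
    (ρ : Matrix ((Fin t → Fin N) × Fin K) ((Fin t → Fin N) × Fin K) ℂ)
    (hρ : ρ.PosSemidef) (hρtr : ρ.trace = 1)
    (μ : Measure (Matrix.unitaryGroup (Fin N) ℂ)) [IsProbabilityMeasure μ]
    (hinv : ∀ V : Matrix.unitaryGroup (Fin N) ℂ, μ.map (fun U => V * U) = μ) :
    1 - (t : ℝ) * ((t : ℝ) - 1) / ((N : ℝ) + 1) ≤
      ∫ C,
        (((distProj N t ⊗ₖ (1 : Matrix (Fin K) (Fin K) ℂ)) *
            (tensorPow N t (C : Matrix (Fin N) (Fin N) ℂ) ⊗ₖ (1 : Matrix (Fin K) (Fin K) ℂ)) *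
            ρ *
            (tensorPow N t ((C : Matrix (Fin N) (Fin N) ℂ)ᴴ) ⊗ₖ (1 : Matrix (Fin K) (Fin K) ℂ)) *
            (distProj N t ⊗ₖ (1 : Matrix (Fin K) (Fin K) ℂ))).trace).re ∂μ := by
  obtain ⟨B, hB⟩ : ∃ B : Matrix ((Fin t → Fin N) × Fin K) ((Fin t → Fin N) × Fin K) ℂ,
      ρ = B * Bᴴ := by
    classical
    open scoped MatrixOrder Matrix.Norms.L2Operator in
    obtain ⟨B, hB⟩ := CStarAlgebra.nonneg_iff_eq_mul_star_self.mp hρ.nonneg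
    exact ⟨B, hB⟩
  subst hB
  simp only [trace_eq]
  refine dist_bound _ ?_ μ hinv
  apply Complex.ofReal_injective
  rw [Complex.ofReal_one, ← hρtr, Matrix.trace, Fintype.sum_prod_type, Fintype.sum_prod_type,
    Finset.sum_comm (s := (Finset.univ : Finset (Fin t → Fin N)))]
  push_cast
  refine Finset.sum_congr rfl fun k _ => ?_
  rw [Finset.sum_comm]
  refine Finset.sum_congr rfl fun y _ => ?_
  rw [Matrix.diag_apply, Matrix.mul_apply]
  refine Finset.sum_congr rfl fun m _ => ?_
  exact (Complex.mul_conj _).symm
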